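/- Let D be a connected Eulerian digraph. Then the Martin polynomial satisfies s_D(1 − t) = − ∑_{a ∈ Q(D)} (−1)^{|a|} χ_{L(a)}(t), where Q(D) is the set of partitions of E(D) into directed cycles, |a| is the number of cycles in a, and χ_{L(a)} is the characteristic polynomial of the bond lattice of the intersection graph of the cycles of a. Equivalently, for the circuit partition polynomial, r_D(−t) = ∑_{a ∈ Q(D)} (−1)^{|a|} P_{G_a}(t), where P_{G_a} is the chromatic polynomial of the intersection graph G_a. -/

import Mathlib

/-- `l` is a nonempty closed directed trail in the digraph with edge type `E` and
endpoint maps `src`, `tgt`: the edges are distinct and consecutive (cyclically). -/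
def IsClosedTrail {V E : Type*} (src tgt : E → V) (l : List E) : Prop :=
  l ≠ [] ∧ l.Nodup ∧ List.Chain' (fun e f => tgt e = src f) l ∧
  ∀ h : l ≠ [], tgt (l.getLast h) = src (l.head h)

/-- `l` is an Eulerian closed trail of the subdigraph with edge set `A`. -/
def IsEulerianOn {V E : Type*} (src tgt : E → V) (A : Set E) (l : List E) : Prop :=
  IsClosedTrail src tgt l ∧ ∀ e, e ∈ l ↔ e ∈ A

/-- The edge set `A` is the edge set of a (connected) Eulerian subdigraph. -/
def IsEulerianSet {V E : Type*} (src tgt : E → V) (A : Set E) : Prop :=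
  ∃ l, IsEulerianOn src tgt A l

/-- The number of Eulerian circuits of the subdigraph with edge set `A`: Eulerian closed
trails up to cyclic rotation of the edges. -/
noncomputable def numEC {V E : Type*} (src tgt : E → V) (A : Set E) : ℕ :=
  Nat.card (Quot fun l₁ l₂ : {l : List E // IsEulerianOn src tgt A l} =>
    ∃ m, (l₂ : List E) = (l₁ : List E).rotate m)

/-- The edge set `A` is the edge set of a directed cycle (an Eulerian closed trail with
no repeated vertices). -/
def IsCycleSet {V E : Type*} (src tgt : E → V) (A : Set E) : Prop :=
  ∃ l, IsEulerianOn src tgt A l ∧ (l.map src).Nodup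

/-- The partition (setoid) `s` of the edge set partitions it into blocks each of which is
the edge set of a connected Eulerian subdigraph; these are the elements of `T(D)`. -/
def EulerianPartition {V E : Type*} (src tgt : E → V) (s : Setoid E) : Prop :=
  ∀ x : E, IsEulerianSet src tgt {y | s.r x y}

/-- `f_k(D)`: the number of partitions of Eulerian circuits of `D` into `k` circuits,
computed as the sum over partitions of `E(D)` into `k` connected Eulerian blocks of the
product of the numbers of Eulerian circuits of the blocks. -/
noncomputable def fk {V E : Type*} [Fintype E] (src tgt : E → V) (k : ℕ) : ℕ :=
  ∑ᶠ a ∈ {a : Setoid E | EulerianPartition src tgt a ∧ Nat.card (Quotient a) = k},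
    ∏ᶠ q : Quotient a, numEC src tgt {e | Quotient.mk a e = q}

/-- Adjacency in the intersection graph `G_a` of a partition `a` of the edge set into
cycles: two distinct cycles are adjacent iff they share a vertex of `D`. -/
def InterAdj {V E : Type*} (src tgt : E → V) (a : Setoid E)
    (q₁ q₂ : Quotient a) : Prop :=
  q₁ ≠ q₂ ∧ ∃ e f : E, Quotient.mk a e = q₁ ∧ Quotient.mk a f = q₂ ∧
    ({src e, tgt e} ∩ {src f, tgt f} : Set V).Nonempty

/-- The number of proper colorings of the intersection graph `G_a` with `n` colors,
i.e. the value `P_{G_a}(n)` of its chromatic polynomial. -/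
noncomputable def numProperColorings {V E : Type*} (src tgt : E → V)
    (a : Setoid E) (n : ℕ) : ℕ :=
  Nat.card {c : Quotient a → Fin n //
    ∀ q₁ q₂, InterAdj src tgt a q₁ q₂ → c q₁ ≠ c q₂}

/-!
A permutation `σ` of the edges with `src ∘ σ = tgt` (a transition system) is the same thing as a
partition of the edges into circuits, namely its cycles, so `r_D(t) = ∑_σ t ^ c(σ)` with `c(σ)` the
number of cycles. At `t = -n` the term of `σ` is `(-1) ^ c(σ)` times the number of `σ`-invariant
colorings of the edges with `n` colors. If such a coloring gives two edges `x`, `y` leaving a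
common vertex the same color, then `σ ↦ (x y) σ` pairs off the transition systems preserving it
and reverses the sign `(-1) ^ c(σ)`. The surviving colorings are those in which edges leaving a
common vertex have distinct colors: each circuit of `σ` is then a directed cycle, `σ` is determined
by the partition `a` into these cycles, and the colorings are the proper colorings of `G_a`.
-/

section Permutations

open Equiv Equiv.Perm Function

variable {α β : Type*}

/-- The number of cycles of a permutation, fixed points included. -/
noncomputable def numCycles (σ : Perm α) : ℕ :=
  Nat.card (Quotient (SameCycle.setoid σ))

theorem mk_sameCycle_apply (σ : Perm α) (x : α) :
    Quotient.mk (SameCycle.setoid σ) (σ x) = Quotient.mk (SameCycle.setoid σ) x :=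
  Quotient.sound (sameCycle_apply_left.2 (SameCycle.refl σ x))

theorem mk_sameCycle_comp (σ : Perm α) :
    Quotient.mk (SameCycle.setoid σ) ∘ σ = Quotient.mk (SameCycle.setoid σ) :=
  funext (mk_sameCycle_apply σ)

theorem numCycles_eq_card_cycleFactorsFinset_add_card_fixedPoints [Fintype α] [DecidableEq α]
    (σ : Perm α) :
    numCycles σ = σ.cycleFactorsFinset.card + Fintype.card (fixedPoints σ) := by
  obtain ⟨r⟩ := Basis.nonempty σ
  let rep : σ.cycleFactorsFinset ⊕ fixedPoints σ → Quotient (SameCycle.setoid σ) :=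
    Sum.elim (fun c => Quotient.mk _ (r c)) fun x => Quotient.mk _ x
  have not_sameCycle (c : σ.cycleFactorsFinset) (x : fixedPoints σ) : ¬ σ.SameCycle (r c) x :=
    fun h => mem_support.1 (mem_cycleFactorsFinset_support_le c.2 (r.mem_support_self c))
      (h.apply_eq_self_iff.2 x.2)
  have rep_injective : Injective rep := by
    rintro (c | x) (d | y) h <;> have h := Quotient.exact h
    · rw [Subtype.ext ((r.cycleOf_eq c).symm.trans (h.cycleOf_eq.trans (r.cycleOf_eq d)))]
    · exact absurd h (not_sameCycle c y)
    · exact absurd h.symm (not_sameCycle d x)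
    · rw [Subtype.ext (h.eq_of_left x.2)]
  have rep_surjective : Surjective rep := by
    rintro ⟨x⟩
    obtain hx | ⟨c, -, hc⟩ := r.mem_fixedPoints_or_exists_zpow_eq x
    · exact ⟨.inr ⟨x, hx⟩, rfl⟩
    · exact ⟨.inl c, Quotient.sound hc⟩
  rw [numCycles, ← Nat.card_eq_of_bijective rep ⟨rep_injective, rep_surjective⟩, Nat.card_sum,
    Nat.card_eq_fintype_card, Nat.card_eq_fintype_card, Fintype.card_coe]

theorem neg_one_pow_numCycles [Fintype α] [DecidableEq α] (σ : Perm α) :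
    (-1 : ℤ) ^ numCycles σ = (-1) ^ Fintype.card α * sign σ := by
  have hcard : σ.cycleType.card = σ.cycleFactorsFinset.card := by
    rw [cycleType_def, Multiset.card_map, Finset.card_val]
  have hle := sum_cycleType_le σ
  rw [numCycles_eq_card_cycleFactorsFinset_add_card_fixedPoints, card_fixedPoints, ← hcard,
    sign_of_cycleType]
  push_cast
  rw [← pow_add, neg_one_pow_congr]
  grind

theorem neg_one_pow_numCycles_swap_mul [Finite α] [DecidableEq α] {x y : α} (hxy : x ≠ y)
    (σ : Perm α) : (-1 : ℤ) ^ numCycles (swap x y * σ) = -(-1) ^ numCycles σ := by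
  have := Fintype.ofFinite α
  simp only [neg_one_pow_numCycles, Perm.sign_mul, sign_swap hxy, Units.val_neg,
    neg_one_mul, mul_neg]

theorem comp_swap_eq_self [DecidableEq α] {f : α → β} {x y : α} (h : f x = f y) :
    f ∘ swap x y = f := by
  rw [comp_swap_eq_update, h, update_eq_self, ← h, update_eq_self]

theorem sameCycle_setoid_le_ker_iff {σ : Perm α} {f : α → β} :
    SameCycle.setoid σ ≤ Setoid.ker f ↔ f ∘ σ = f := by
  refine ⟨fun h => funext fun x => h (sameCycle_apply_left.2 (SameCycle.refl σ x)), fun h => ?_⟩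
  rintro x _ ⟨i, rfl⟩
  have apply_eq (y : α) : f (σ y) = f y := congrFun h y
  rw [Setoid.ker_def]
  induction i with
  | zero => rfl
  | succ i ih => rw [ih, add_comm, zpow_one_add, mul_apply, apply_eq]
  | pred i ih => rw [ih, ← apply_eq ((σ ^ (-(i : ℤ) - 1)) x), ← mul_apply,
      ← zpow_one_add, add_sub_cancel]

/-- Functions on the set of cycles of `σ` are the `σ`-invariant functions. -/
def cyclesFunEquivInvariant (σ : Perm α) :
    (Quotient (SameCycle.setoid σ) → β) ≃ {f : α → β // f ∘ σ = f} :=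
  (Setoid.liftEquiv _).symm.trans (Equiv.subtypeEquivRight fun _ => sameCycle_setoid_le_ker_iff)

theorem card_comp_eq_self [Finite α] (σ : Perm α) :
    Nat.card {f : α → β // f ∘ σ = f} = Nat.card β ^ numCycles σ := by
  rw [← Nat.card_congr (cyclesFunEquivInvariant σ), Nat.card_fun, numCycles]

theorem sameCycle_iff_mem_of_isCycleOn {σ : Perm α} {s : Set α} (hσ : σ.IsCycleOn s) {x y : α}
    (hx : x ∈ s) : σ.SameCycle x y ↔ y ∈ s := by
  rw [← hσ.range_zpow hx]
  rfl

theorem isCycleOn_of_eqOn {σ τ : Perm α} {s : Set α} (hσ : σ.IsCycleOn s) (h : Set.EqOn σ τ s) :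
    τ.IsCycleOn s := by
  have hτ : Set.BijOn τ s s := hσ.1.congr h
  have hmem (x : α) : τ x ∈ s ↔ x ∈ s := by
    simpa only [hτ.image_eq] using τ.injective.mem_set_image (s := s) (a := x)
  have hperm : σ.subtypePerm (fun _ => hσ.apply_mem_iff) =
      τ.subtypePerm hmem :=
    Equiv.ext fun x => Subtype.ext (h x.2)
  refine ⟨hτ, fun x hx y hy => ?_⟩
  have := hσ.subtypePerm.2 (Set.mem_univ ⟨x, hx⟩) (Set.mem_univ ⟨y, hy⟩)
  rw [hperm] at this
  exact sameCycle_subtypePerm.1 this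

theorem sameCycle_setoid_eq_iff {σ : Perm α} {a : Setoid α} :
    SameCycle.setoid σ = a ↔ ∀ q : Quotient a, σ.IsCycleOn {x | Quotient.mk a x = q} := by
  constructor
  · rintro rfl q
    refine ⟨σ.bijOn fun x => ?_, fun x hx y hy => Quotient.exact (hx.trans hy.symm)⟩
    rw [Set.mem_ofPred_eq, mk_sameCycle_apply, Set.mem_ofPred_eq]
  · intro h
    ext x y
    exact (sameCycle_iff_mem_of_isCycleOn (h (Quotient.mk a x)) rfl).trans
      (eq_comm.trans Quotient.eq)

open Classical in
/-- The permutation acting as `σ` on an invariant set `s` and as the identity outside `s`. -/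
noncomputable def restrictSet (σ : Perm α) (s : Set α) (hs : ∀ x, σ x ∈ s ↔ x ∈ s) : Perm α :=
  ofSubtype (σ.subtypePerm hs)

theorem restrictSet_apply_of_mem {σ : Perm α} {s : Set α} (hs : ∀ x, σ x ∈ s ↔ x ∈ s) {x : α}
    (hx : x ∈ s) : restrictSet σ s hs x = σ x := by
  classical
  exact ofSubtype_apply_of_mem (σ.subtypePerm hs) hx

theorem restrictSet_apply_of_notMem {σ : Perm α} {s : Set α} (hs : ∀ x, σ x ∈ s ↔ x ∈ s) {x : α}
    (hx : x ∉ s) : restrictSet σ s hs x = x := by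
  classical
  exact ofSubtype_apply_of_not_mem (σ.subtypePerm hs) hx

/-- The permutation acting on the fiber of `f` over `i` as `τ i`. -/
def glueFibers (f : α → β) (τ : β → Perm α) (hτ : ∀ i x, f (τ i x) = i ↔ f x = i) : Perm α where
  toFun x := τ (f x) x
  invFun x := (τ (f x)).symm x
  left_inv x := by
    have hx : f (τ (f x) x) = f x := (hτ _ x).2 rfl
    simp only [hx, symm_apply_apply]
  right_inv x := by
    have hx : f ((τ (f x)).symm x) = f x := (hτ _ _).1 (by rw [apply_symm_apply])
    simp only [hx, apply_symm_apply]

theorem exists_nodup_formPerm_eq [Finite α] [DecidableEq α] {σ : Perm α} {s : Set α}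
    (hσ : σ.IsCycleOn s) (hfix : ∀ x ∉ s, σ x = x) :
    ∃ l : List α, l.Nodup ∧ (∀ x, x ∈ l ↔ x ∈ s) ∧ l.formPerm = σ := by
  have := Fintype.ofFinite α
  obtain hs | hs := s.subsingleton_or_nontrivial
  · have hone : σ = 1 := by
      ext x
      by_cases hx : x ∈ s
      · exact hs (hσ.1.mapsTo hx) hx
      · exact hfix x hx
    obtain rfl | ⟨x, rfl⟩ := hs.eq_empty_or_singleton
    · exact ⟨[], List.nodup_nil, by simp, by rw [hone, List.formPerm_nil]⟩
    · exact ⟨[x], List.nodup_singleton x, by simp, by rw [hone, List.formPerm_singleton]⟩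
  · obtain ⟨x, hx⟩ := hs.nonempty
    refine ⟨σ.toList x, nodup_toList σ x, fun y => ?_, ?_⟩
    · rw [mem_toList_iff, sameCycle_iff_mem_of_isCycleOn hσ hx]
      exact and_iff_left (mem_support.2 (hσ.apply_ne hs hx))
    · rw [formPerm_toList]
      ext y
      by_cases hy : σ.SameCycle x y
      · rw [hy.cycleOf_apply]
      · rw [cycleOf_apply_of_not_sameCycle hy,
          hfix y (mt (sameCycle_iff_mem_of_isCycleOn hσ hx).2 hy)]

theorem formPerm_eq_formPerm_iff_isRotated [DecidableEq α] {l l' : List α} (hl : l.Nodup)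
    (h : l.Perm l') : l.formPerm = l'.formPerm ↔ l ~r l' := by
  rw [List.formPerm_eq_formPerm_iff hl (h.nodup_iff.1 hl), or_iff_left_of_imp]
  rintro ⟨hle, -⟩
  match l, hle with
  | [], _ => rw [List.nil_perm.1 h]
  | [x], _ => rw [List.singleton_perm.1 h]

end Permutations

section Circuits

open Equiv Equiv.Perm

variable {V E : Type*} {src tgt : E → V} {A : Set E}

theorem isClosedTrail_iff_getElem {l : List E} :
    IsClosedTrail src tgt l ↔ l ≠ [] ∧ l.Nodup ∧ ∀ (i : ℕ) (hi : i < l.length),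
      tgt l[i] = src (l[(i + 1) % l.length]'(Nat.mod_lt _ (i.zero_le.trans_lt hi))) := by
  refine and_congr_right fun hne => and_congr_right fun _ => ?_
  have hpos := List.length_pos_iff.2 hne
  constructor
  · rintro ⟨hchain, hclosed⟩ i hi
    obtain h | h := Nat.lt_or_eq_of_le (Nat.succ_le_of_lt hi)
    · simpa only [Nat.mod_eq_of_lt h] using List.isChain_iff_getElem.1 hchain i h
    · have := hclosed hne
      rw [List.getLast_eq_getElem, List.head_eq_getElem] at this
      obtain rfl : i = l.length - 1 := Nat.eq_sub_of_add_eq h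
      simpa only [Nat.sub_add_cancel hpos, Nat.mod_self] using this
  · intro h
    refine ⟨List.isChain_iff_getElem.2 fun i hi => ?_, fun _ => ?_⟩
    · simpa only [Nat.mod_eq_of_lt hi] using h i (Nat.lt_of_succ_lt hi)
    · rw [List.getLast_eq_getElem, List.head_eq_getElem]
      simpa only [Nat.sub_add_cancel hpos, Nat.mod_self] using
        h (l.length - 1) (Nat.sub_one_lt hpos.ne')

theorem isClosedTrail_iff_formPerm [DecidableEq E] {l : List E} :
    IsClosedTrail src tgt l ↔ l ≠ [] ∧ l.Nodup ∧ ∀ e ∈ l, src (l.formPerm e) = tgt e := by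
  rw [isClosedTrail_iff_getElem]
  refine and_congr_right fun _ => and_congr_right fun hl => ?_
  rw [List.forall_mem_iff_getElem]
  refine forall₂_congr fun i hi => ?_
  rw [List.formPerm_apply_getElem l hl i hi, eq_comm]

/-- `τ` is an Eulerian circuit of the subdigraph with nonempty edge set `A`, encoded as the
permutation of `E` which sends each edge in `A` to the next one along the circuit and fixes the
edges outside `A`. Unlike a list of edges, this has no distinguished starting point. -/
structure IsCircuitPerm (src tgt : E → V) (A : Set E) (τ : Perm E) : Prop where
  nonempty : A.Nonempty
  isCycleOn : τ.IsCycleOn A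
  src_apply : ∀ e ∈ A, src (τ e) = tgt e
  apply_of_notMem : ∀ e ∉ A, τ e = e

theorem IsEulerianOn.isCircuitPerm_formPerm [DecidableEq E] {l : List E}
    (h : IsEulerianOn src tgt A l) : IsCircuitPerm src tgt A l.formPerm := by
  obtain ⟨htrail, hmem⟩ := h
  obtain rfl : {e | e ∈ l} = A := Set.ext hmem
  obtain ⟨hne, hnodup, hsrc⟩ := isClosedTrail_iff_formPerm.1 htrail
  exact ⟨List.exists_mem_of_ne_nil l hne, hnodup.isCycleOn_formPerm, hsrc,
    fun e he => List.formPerm_apply_of_notMem he⟩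

theorem IsCircuitPerm.exists_isEulerianOn [Finite E] [DecidableEq E] {τ : Perm E}
    (h : IsCircuitPerm src tgt A τ) : ∃ l, IsEulerianOn src tgt A l ∧ l.formPerm = τ := by
  obtain ⟨l, hnodup, hmem, rfl⟩ := exists_nodup_formPerm_eq h.isCycleOn h.apply_of_notMem
  obtain ⟨x, hx⟩ := h.nonempty
  refine ⟨l, ⟨isClosedTrail_iff_formPerm.2 ⟨List.ne_nil_of_mem ((hmem x).2 hx), hnodup,
    fun e he => h.src_apply e ((hmem e).1 he)⟩, hmem⟩, rfl⟩

theorem isEulerianSet_iff_exists_isCircuitPerm [Finite E] :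
    IsEulerianSet src tgt A ↔ ∃ τ, IsCircuitPerm src tgt A τ := by
  classical
  exact ⟨fun ⟨_, hl⟩ => ⟨_, hl.isCircuitPerm_formPerm⟩,
    fun ⟨_, hτ⟩ => hτ.exists_isEulerianOn.imp fun _ => And.left⟩

theorem IsEulerianOn.perm {l l' : List E} (h : IsEulerianOn src tgt A l)
    (h' : IsEulerianOn src tgt A l') : l.Perm l' :=
  (List.perm_ext_iff_of_nodup h.1.2.1 h'.1.2.1).2 fun e => (h.2 e).trans (h'.2 e).symm

theorem IsEulerianOn.formPerm_eq_iff [DecidableEq E] {l l' : List E} (h : IsEulerianOn src tgt A l)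
    (h' : IsEulerianOn src tgt A l') : l.formPerm = l'.formPerm ↔ l ~r l' :=
  formPerm_eq_formPerm_iff_isRotated h.1.2.1 (h.perm h')

theorem numEC_eq_card_isCircuitPerm [Finite E] (src tgt : E → V) (A : Set E) :
    numEC src tgt A = Nat.card {τ // IsCircuitPerm src tgt A τ} := by
  classical
  refine Nat.card_eq_of_bijective
    (Quot.lift (fun l => ⟨l.1.formPerm, l.2.isCircuitPerm_formPerm⟩) ?_) ⟨?_, ?_⟩
  · rintro l l' ⟨m, hm⟩
    exact Subtype.ext ((l.2.formPerm_eq_iff l'.2).2 ⟨m, hm.symm⟩)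
  · rintro ⟨l⟩ ⟨l'⟩ h
    obtain ⟨m, hm⟩ := (l.2.formPerm_eq_iff l'.2).1 (Subtype.ext_iff.1 h)
    exact Quot.sound ⟨m, hm.symm⟩
  · rintro ⟨τ, hτ⟩
    obtain ⟨l, hl, rfl⟩ := hτ.exists_isEulerianOn
    exact ⟨Quot.mk _ ⟨l, hl⟩, rfl⟩

theorem isCycleSet_iff : IsCycleSet src tgt A ↔ IsEulerianSet src tgt A ∧ A.InjOn src := by
  rw [IsEulerianSet, ← exists_and_right]
  refine exists_congr fun l => and_congr_right fun hl => ?_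
  obtain rfl : {e | e ∈ l} = A := Set.ext hl.2
  exact ⟨fun h _ hx _ hy => List.inj_on_of_nodup_map h hx hy,
    fun h => hl.1.2.1.map_on fun _ hx _ hy => h hx hy⟩

end Circuits

section TransitionSystems

open Equiv Equiv.Perm

variable {V E : Type*} {src tgt : E → V} {a : Setoid E}

/-- A transition system: every edge `e` is followed by an edge `σ e` leaving the target of `e`.
Its cycles are circuits, so `σ` is the same thing as a partition of the edges into circuits. -/
def IsTransitionSystem (src tgt : E → V) (σ : Perm E) : Prop :=
  ∀ e, src (σ e) = tgt e

theorem IsTransitionSystem.isCircuitPerm_restrictSet {σ : Perm E} {A : Set E}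
    (hσ : IsTransitionSystem src tgt σ) (hA : A.Nonempty) (hσA : σ.IsCycleOn A) :
    IsCircuitPerm src tgt A (restrictSet σ A fun _ => hσA.apply_mem_iff) where
  nonempty := hA
  isCycleOn := isCycleOn_of_eqOn hσA fun _ he => (restrictSet_apply_of_mem _ he).symm
  src_apply e he := by rw [restrictSet_apply_of_mem _ he, hσ e]
  apply_of_notMem _ := restrictSet_apply_of_notMem _

/-- Transition systems with a prescribed partition of the edges into cycles are families of
circuits traversing the blocks of the partition. -/
noncomputable def transitionSystemEquivPi (src tgt : E → V) (a : Setoid E) :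
    {σ : Perm E // IsTransitionSystem src tgt σ ∧ SameCycle.setoid σ = a} ≃
      ∀ q : Quotient a, {τ : Perm E // IsCircuitPerm src tgt {e | Quotient.mk a e = q} τ} where
  toFun σ q :=
    ⟨_, IsTransitionSystem.isCircuitPerm_restrictSet σ.2.1 (Quotient.exists_rep q)
      (sameCycle_setoid_eq_iff.1 σ.2.2 q)⟩
  invFun τ :=
    ⟨glueFibers (Quotient.mk a) (fun q => τ q) fun q _ => (τ q).2.isCycleOn.apply_mem_iff,
      fun e => (τ (Quotient.mk a e)).2.src_apply e rfl,
      sameCycle_setoid_eq_iff.2 fun q =>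
        isCycleOn_of_eqOn (τ q).2.isCycleOn fun e (he : Quotient.mk a e = q) => he ▸ rfl⟩
  left_inv _ := Subtype.ext <| Equiv.ext fun _ => restrictSet_apply_of_mem _ rfl
  right_inv τ := by
    ext q e
    by_cases he : Quotient.mk a e = q
    · subst he
      exact restrictSet_apply_of_mem _ rfl
    · exact (restrictSet_apply_of_notMem (s := {e | Quotient.mk a e = q}) _ he).trans
        ((τ q).2.apply_of_notMem e he).symm

theorem finprod_numEC_eq_card [Finite E] (src tgt : E → V) (a : Setoid E) :
    ∏ᶠ q : Quotient a, numEC src tgt {e | Quotient.mk a e = q} =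
      Nat.card {σ : Perm E // IsTransitionSystem src tgt σ ∧ SameCycle.setoid σ = a} := by
  have := Fintype.ofFinite (Quotient a)
  rw [Nat.card_congr (transitionSystemEquivPi src tgt a), Nat.card_pi, finprod_eq_prod_of_fintype]
  exact Finset.prod_congr rfl fun q _ => numEC_eq_card_isCircuitPerm src tgt _

theorem setOf_rel_eq_setOf_mk (a : Setoid E) (x : E) :
    {y | a.r x y} = {e | Quotient.mk a e = Quotient.mk a x} :=
  Set.ext fun _ => a.comm'.trans Quotient.eq.symm

theorem eulerianPartition_iff_exists_isTransitionSystem [Finite E] :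
    EulerianPartition src tgt a ↔
      ∃ σ : Perm E, IsTransitionSystem src tgt σ ∧ SameCycle.setoid σ = a := by
  rw [← nonempty_subtype, (transitionSystemEquivPi src tgt a).nonempty_congr, Classical.nonempty_pi,
    Quotient.mk_surjective.forall]
  refine forall_congr' fun x => ?_
  rw [setOf_rel_eq_setOf_mk, isEulerianSet_iff_exists_isCircuitPerm, nonempty_subtype]

open Classical in
/-- The finite set of transition systems of a digraph with finitely many edges. -/
noncomputable def transitionSystems [Fintype E] (src tgt : E → V) : Finset (Perm E) :=
  {σ | IsTransitionSystem src tgt σ}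

theorem mem_transitionSystems [Fintype E] {σ : Perm E} :
    σ ∈ transitionSystems src tgt ↔ IsTransitionSystem src tgt σ := by
  simp only [transitionSystems, Finset.mem_filter_univ]

theorem fk_eq_card_transitionSystems [Fintype E] (src tgt : E → V) (k : ℕ) :
    fk src tgt k = {σ ∈ transitionSystems src tgt | numCycles σ = k}.card := by
  classical
  have partitions_eq : {a | EulerianPartition src tgt a ∧ Nat.card (Quotient a) = k} =
      (↑({σ ∈ transitionSystems src tgt | numCycles σ = k}.image SameCycle.setoid) :
        Set (Setoid E)) := by
    ext a
    simp only [Set.mem_ofPred_eq, eulerianPartition_iff_exists_isTransitionSystem,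
      Finset.coe_image, Set.mem_image, Finset.mem_coe, Finset.mem_filter, mem_transitionSystems]
    constructor
    · rintro ⟨⟨σ, hσ, rfl⟩, hk⟩
      exact ⟨σ, ⟨hσ, hk⟩, rfl⟩
    · rintro ⟨σ, ⟨hσ, hk⟩, rfl⟩
      exact ⟨⟨σ, hσ, rfl⟩, hk⟩
  rw [fk, partitions_eq, finsum_mem_coe_finset, Finset.card_eq_sum_card_image SameCycle.setoid]
  refine Finset.sum_congr rfl fun a ha => ?_
  have hk : Nat.card (Quotient a) = k := ((Set.ext_iff.1 partitions_eq a).2 ha).2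
  rw [finprod_numEC_eq_card]
  refine Nat.subtype_card _ fun σ => ?_
  rw [Finset.mem_filter, Finset.mem_filter, mem_transitionSystems, and_assoc]
  refine and_congr_right fun _ => and_iff_right_of_imp ?_
  rintro rfl
  exact hk

theorem finsum_fk_eq_sum_transitionSystems {R : Type*} [CommSemiring R] [Fintype E]
    (src tgt : E → V) (x : R) :
    ∑ᶠ k : ℕ, x ^ k * (fk src tgt k : R) = ∑ σ ∈ transitionSystems src tgt, x ^ numCycles σ := by
  simp only [fk_eq_card_transitionSystems]
  rw [Finset.sum_comp (x ^ ·) numCycles]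
  simp only [nsmul_eq_mul, mul_comm]
  refine finsum_eq_sum_of_support_subset _ fun k hk => ?_
  have hcard : {σ ∈ transitionSystems src tgt | numCycles σ = k}.card ≠ 0 := fun h =>
    hk (by simp only [h, Nat.cast_zero, mul_zero])
  obtain ⟨σ, hσ⟩ := Finset.card_ne_zero.1 hcard
  exact Finset.mem_coe.2 (Finset.mem_image.2 ⟨σ, Finset.mem_filter.1 hσ⟩)

end TransitionSystems

section Colorings

open Equiv Equiv.Perm Function

variable {V E C : Type*} {src tgt : E → V} {a : Setoid E} {σ τ : Perm E} {φ : E → C}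

/-- An edge coloring is out-proper if edges leaving the same vertex have distinct colors. For the
coloring of the edges by the circuits of a transition system, this says that no circuit visits a
vertex twice, so that the circuits are directed cycles. -/
def IsOutProper (src : E → V) (φ : E → C) : Prop :=
  Injective fun e => (src e, φ e)

theorem IsOutProper.of_comp {D : Type*} {g : C → D} (h : IsOutProper src (g ∘ φ)) :
    IsOutProper src φ :=
  Injective.of_comp (f := Prod.map id g) h

theorem isOutProper_iff_injOn : IsOutProper src φ ↔ ∀ c, Set.InjOn src {e | φ e = c} := by
  refine ⟨fun h c x hx y hy hxy => h (Prod.ext hxy (hx.trans hy.symm)), fun h x y hxy => ?_⟩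
  obtain ⟨hsrc, hφ⟩ := Prod.ext_iff.1 hxy
  exact h _ hφ rfl hsrc

theorem forall_isCycleSet_iff : (∀ x, IsCycleSet src tgt {y | a.r x y}) ↔
    EulerianPartition src tgt a ∧ IsOutProper src (Quotient.mk a) := by
  simp only [isCycleSet_iff, forall_and, EulerianPartition, setOf_rel_eq_setOf_mk,
    isOutProper_iff_injOn]
  rw [Quotient.mk_surjective.forall (p := fun q => Set.InjOn src {e | Quotient.mk a e = q})]

theorem IsTransitionSystem.eq_of_isOutProper (hσ : IsTransitionSystem src tgt σ)
    (hτ : IsTransitionSystem src tgt τ) (hσφ : φ ∘ σ = φ) (hτφ : φ ∘ τ = φ)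
    (hφ : IsOutProper src φ) : σ = τ :=
  Equiv.ext fun e => hφ <| Prod.ext ((hσ e).trans (hτ e).symm)
    ((congrFun hσφ e).trans (congrFun hτφ e).symm)

theorem bijOn_sameCycle_setoid [Finite E] (src tgt : E → V) :
    Set.BijOn SameCycle.setoid
      {σ : Perm E | IsTransitionSystem src tgt σ ∧
        IsOutProper src (Quotient.mk (SameCycle.setoid σ))}
      {a | ∀ x, IsCycleSet src tgt {y | a.r x y}} := by
  simp only [forall_isCycleSet_iff, eulerianPartition_iff_exists_isTransitionSystem]
  refine ⟨fun σ hσ => ⟨⟨σ, hσ.1, rfl⟩, hσ.2⟩, fun σ hσ τ hτ h => ?_, ?_⟩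
  · refine hσ.1.eq_of_isOutProper hτ.1 (mk_sameCycle_comp σ) ?_ hσ.2
    rw [h, mk_sameCycle_comp]
  · rintro _ ⟨⟨σ, hσ, rfl⟩, hsimple⟩
    exact ⟨σ, ⟨hσ, hsimple⟩, rfl⟩

theorem IsTransitionSystem.exists_sameCycle_src_eq (hσ : IsTransitionSystem src tgt σ)
    {e : E} {v : V} (hv : v ∈ ({src e, tgt e} : Set V)) : ∃ e', src e' = v ∧
      Quotient.mk (SameCycle.setoid σ) e' = Quotient.mk (SameCycle.setoid σ) e := by
  obtain rfl | rfl := hv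
  · exact ⟨e, rfl, rfl⟩
  · exact ⟨σ e, hσ e, mk_sameCycle_apply σ e⟩

theorem IsTransitionSystem.forall_interAdj_ne_iff (hσ : IsTransitionSystem src tgt σ)
    (hsimple : IsOutProper src (Quotient.mk (SameCycle.setoid σ)))
    (c : Quotient (SameCycle.setoid σ) → C) :
    (∀ q₁ q₂, InterAdj src tgt _ q₁ q₂ → c q₁ ≠ c q₂) ↔ IsOutProper src (c ∘ Quotient.mk _) := by
  constructor
  · intro h e f hef
    obtain ⟨hsrc, hc⟩ := Prod.ext_iff.1 hef
    by_cases hq : Quotient.mk (SameCycle.setoid σ) e = Quotient.mk _ f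
    · exact hsimple (Prod.ext hsrc hq)
    · exact absurd hc (h _ _ ⟨hq, e, f, rfl, rfl, src e, Or.inl rfl, Or.inl hsrc⟩)
  · rintro h _ _ ⟨hne, e, f, rfl, rfl, v, he, hf⟩ hc
    obtain ⟨e', he', hqe⟩ := hσ.exists_sameCycle_src_eq he
    obtain ⟨f', hf', hqf⟩ := hσ.exists_sameCycle_src_eq hf
    have hef : e' = f' := h (Prod.ext (he'.trans hf'.symm) (by simpa only [comp_apply, hqe, hqf]))
    exact hne (by rw [← hqe, ← hqf, hef])

theorem IsTransitionSystem.numProperColorings_eq_card (hσ : IsTransitionSystem src tgt σ)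
    (hsimple : IsOutProper src (Quotient.mk (SameCycle.setoid σ))) (n : ℕ) :
    numProperColorings src tgt (SameCycle.setoid σ) n =
      Nat.card {φ : E → Fin n // φ ∘ σ = φ ∧ IsOutProper src φ} :=
  Nat.card_congr <| ((cyclesFunEquivInvariant σ).subtypeEquiv
    (q := fun φ => IsOutProper src φ.1) (hσ.forall_interAdj_ne_iff hsimple)).trans
      (Equiv.subtypeSubtypeEquivSubtypeInter (fun φ : E → Fin n => φ ∘ σ = φ) (IsOutProper src))

theorem IsOutProper.mk_sameCycle (hφ : IsOutProper src φ) (hσ : φ ∘ σ = φ) :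
    IsOutProper src (Quotient.mk (SameCycle.setoid σ)) :=
  IsOutProper.of_comp (g := Quotient.lift φ fun _ _ h => sameCycle_setoid_le_ker_iff.2 hσ h) hφ

theorem finsum_isCycleSet_eq_sum_transitionSystems [Fintype E] (src tgt : E → V) (n : ℕ) :
    ∑ᶠ a ∈ {a : Setoid E | ∀ x : E, IsCycleSet src tgt {y | a.r x y}},
        (-1 : ℤ) ^ Nat.card (Quotient a) * (numProperColorings src tgt a n : ℤ) =
      ∑ σ ∈ transitionSystems src tgt, (-1 : ℤ) ^ numCycles σ *
        (Nat.card {φ : E → Fin n // φ ∘ σ = φ ∧ IsOutProper src φ} : ℤ) := by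
  rw [← finsum_mem_eq_of_bijOn _ (bijOn_sameCycle_setoid src tgt) fun σ hσ => by
    rw [hσ.1.numProperColorings_eq_card hσ.2, ← numCycles]]
  refine finsum_cond_eq_sum_of_cond_iff _ fun {σ} hne => ?_
  have hcard : Nat.card {φ : E → Fin n // φ ∘ σ = φ ∧ IsOutProper src φ} ≠ 0 := fun h =>
    hne (by rw [h, Nat.cast_zero, mul_zero])
  obtain ⟨⟨φ, hσφ, hφ⟩⟩ := (Nat.card_ne_zero.1 hcard).1
  rw [mem_transitionSystems]
  exact and_iff_left (hφ.mk_sameCycle hσφ)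

end Colorings

section Cancellation

open Equiv Equiv.Perm Function

variable {V E C : Type*} {src tgt : E → V} {σ : Perm E} {φ : E → C}

theorem IsTransitionSystem.swap_mul [DecidableEq E] (hσ : IsTransitionSystem src tgt σ) {x y : E}
    (hxy : src x = src y) : IsTransitionSystem src tgt (swap x y * σ) := fun e =>
  (congrFun (comp_swap_eq_self hxy) (σ e)).trans (hσ e)

theorem sum_neg_one_pow_numCycles_eq_zero [Fintype E] [DecidableEq C] (hφ : ¬ IsOutProper src φ) :
    ∑ σ ∈ transitionSystems src tgt with φ ∘ (σ : Perm E) = φ, (-1 : ℤ) ^ numCycles σ = 0 := by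
  classical
  simp only [IsOutProper, Injective, not_forall, Prod.ext_iff] at hφ
  obtain ⟨x, y, ⟨hsrc, hcolor⟩, hne⟩ := hφ
  refine Finset.sum_involution (fun σ _ => swap x y * σ) ?_ ?_ ?_ ?_
  · intro σ _
    rw [neg_one_pow_numCycles_swap_mul hne, add_neg_cancel]
  · intro σ _ _ h
    exact hne (swap_eq_one_iff.1 (mul_eq_right.1 h))
  · intro σ hσ
    rw [Finset.mem_filter, mem_transitionSystems] at hσ ⊢
    refine ⟨hσ.1.swap_mul hsrc, ?_⟩
    rw [coe_mul, ← comp_assoc, comp_swap_eq_self hcolor, hσ.2]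
  · intro σ _
    exact swap_mul_self_mul x y σ

theorem sum_neg_one_pow_mul_card_comp_eq_self [Fintype E] [Finite C] (src tgt : E → V) :
    ∑ σ ∈ transitionSystems src tgt, (-1 : ℤ) ^ numCycles σ *
        (Nat.card {φ : E → C // φ ∘ σ = φ} : ℤ) =
      ∑ σ ∈ transitionSystems src tgt, (-1 : ℤ) ^ numCycles σ *
        (Nat.card {φ : E → C // φ ∘ σ = φ ∧ IsOutProper src φ} : ℤ) := by
  classical
  have := Fintype.ofFinite C
  simp only [Nat.card_eq_fintype_card, Fintype.card_subtype, Finset.natCast_card_filter,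
    Finset.mul_sum]
  rw [Finset.sum_comm, Finset.sum_comm (t := Finset.univ)]
  refine Finset.sum_congr rfl fun φ _ => ?_
  by_cases hφ : IsOutProper src φ
  · simp only [hφ, and_true]
  · simp only [hφ, and_false, if_false, mul_zero, Finset.sum_const_zero, mul_ite, mul_one]
    rw [← Finset.sum_filter, sum_neg_one_pow_numCycles_eq_zero hφ]

end Cancellation

theorem circuit_partition_poly_eq_chromatic_sum_general {V E : Type*} [Fintype E]
    (src tgt : E → V) (n : ℕ) :
    (∑ᶠ k : ℕ, (-(n : ℤ)) ^ k * (fk src tgt k : ℤ)) =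
      ∑ᶠ a ∈ {a : Setoid E | ∀ x : E, IsCycleSet src tgt {y | a.r x y}},
        (-1 : ℤ) ^ Nat.card (Quotient a) *
          (numProperColorings src tgt a n : ℤ) := by
  calc
    _ = ∑ σ ∈ transitionSystems src tgt, (-(n : ℤ)) ^ numCycles σ :=
      finsum_fk_eq_sum_transitionSystems src tgt _
    _ = ∑ σ ∈ transitionSystems src tgt, (-1 : ℤ) ^ numCycles σ *
          (Nat.card {φ : E → Fin n // φ ∘ σ = φ} : ℤ) :=
      Finset.sum_congr rfl fun σ _ => by
        rw [card_comp_eq_self, Nat.card_fin, Nat.cast_pow, ← mul_pow, neg_one_mul]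
    _ = ∑ σ ∈ transitionSystems src tgt, (-1 : ℤ) ^ numCycles σ *
          (Nat.card {φ : E → Fin n // φ ∘ σ = φ ∧ IsOutProper src φ} : ℤ) :=
      sum_neg_one_pow_mul_card_comp_eq_self src tgt
    _ = _ := (finsum_isCycleSet_eq_sum_transitionSystems src tgt n).symm

/-- For a connected Eulerian digraph `D`, the circuit partition polynomial
`r_D(t) = ∑_{k ≥ 1} t^k f_k(D)` satisfies
`r_D(−t) = ∑_{a ∈ Q(D)} (−1)^{|a|} P_{G_a}(t)`, where `Q(D)` is the set of partitions of
`E(D)` into directed cycles and `P_{G_a}` is the chromatic polynomial of the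
intersection graph `G_a`. (Stated as an identity of the polynomial values at every
`n : ℕ`; equivalently, `s_D(1 − t) = −∑_{a ∈ Q(D)} (−1)^{|a|} χ_{L(a)}(t)` for the
Martin polynomial and the characteristic polynomials of the bond lattices.) -/
theorem circuit_partition_poly_eq_chromatic_sum {V E : Type*} [Fintype V] [Fintype E]
    (src tgt : E → V) (hD : IsEulerianSet src tgt Set.univ) (n : ℕ) :
    (∑ᶠ k : ℕ, (-(n : ℤ)) ^ k * (fk src tgt k : ℤ)) =
      ∑ᶠ a ∈ {a : Setoid E | ∀ x : E, IsCycleSet src tgt {y | a.r x y}},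
        (-1 : ℤ) ^ Nat.card (Quotient a) *
          (numProperColorings src tgt a n : ℤ) := by
  exact circuit_partition_poly_eq_chromatic_sum_general src tgt n
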